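/- Let Q be a polyhedron in V, let T be the set of all subsets of V of the form C_F(Q) + v with F a face of Q and v ∈ V, and let I(Def⁺(Q)) be the subgroup of ℤ^V generated by {1_P : P ∈ Def⁺(Q)}. Then there is a unique ℤ-linear map ℱ : I(Def⁺(Q)) → ⊕_{C∈T} ℤ such that for every P ∈ Def⁺(Q), ℱ(1_P) = ∑_{C ∈ T tightly containing P} e_C (a finite sum, where {e_C}_{C∈T} is the standard basis of the direct sum), and ℱ is an isomorphism of abelian groups. -/

import Mathlib

/-!
Everything rests on the Euler characteristic (`euler_closed`): a linear relation
`∑ aᵢ 1_{Kᵢ} = 0` between indicator functions of closed convex sets implies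
`∑_{Kᵢ ≠ ∅} aᵢ = 0`. It is proved by slicing, one linear functional at a time, which reduces it to
compact intervals in `ℝ`.

*The map exists* (`tightMap_eq_zero`). Let `F` be the face of `Q` where `y` is maximal. An extended
deformation `P` is tightly contained in `v + C_F(Q)` iff `P` meets `v + lineal C_F(Q)` and
`⟪y, ·⟫ ≤ ⟪y, v⟫` on `P` (`TCtight_transl_iff`). This condition is a difference of conditions of
the form `P ∩ A ≠ ∅` with `A` closed convex (`euler_tight_compact`), so it respects the relations
between indicator functions.

*It is injective* (`indMap_eq_zero`). A functional bounded above on a polyhedron attains its maximum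
(`IsPolyhedron.exists_max`), hence the image of `1_P` determines, linearly, whether `P` lies in a
given half-space (`halfspace_functional`). For a point `x`, the set
`{y | ∀ p ∈ P, ⟪y, p⟫ ≤ ⟪y, x⟫ - 1}` is closed and convex, and nonempty iff `x ∉ P`; applying the
Euler characteristic to these sets recovers `1_P(x)`.

*It is surjective* (`tightMap_surjective`). The translates of tangent cones are themselves extended
deformations, and on their indicators the map is unitriangular with respect to inclusion of the
cones.
-/

open RealInnerProductSpace

noncomputable def indic {V : Type*} (P : Set V) : V → ℤ := P.indicator 1

noncomputable def iv (p : Prop) : ℤ := @ite _ p (Classical.propDecidable p) 1 0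

def Valuative {V A : Type*} [AddCommGroup A] (Fam : Set (Set V)) (f : Set V → A) : Prop :=
  ∀ (k : ℕ) (a : Fin k → ℤ) (P : Fin k → Set V),
    (∀ i, P i ∈ Fam) → (∑ i, a i • indic (P i)) = 0 → (∑ i, a i • f (P i)) = 0

variable {V : Type*} [NormedAddCommGroup V] [InnerProductSpace ℝ V] [FiniteDimensional ℝ V]

def IsPolyhedron (P : Set V) : Prop :=
  P.Nonempty ∧ ∃ s : Finset (V × ℝ), P = {x | ∀ p ∈ s, ⟪p.1, x⟫ ≤ p.2}

def IsFace (Q F : Set V) : Prop :=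
  ∃ y : V, F.Nonempty ∧ F = {x | x ∈ Q ∧ ∀ q ∈ Q, ⟪y, q⟫ ≤ ⟪y, x⟫}

def IsConvexCone (C : Set V) : Prop :=
  (0 : V) ∈ C ∧ Convex ℝ C ∧ ∀ c : ℝ, 0 ≤ c → ∀ x ∈ C, c • x ∈ C

def coneGen (S : Set V) : Set V := ⋂₀ {C : Set V | IsConvexCone C ∧ S ⊆ C}

def tanCone (Q F : Set V) : Set V := coneGen {d | ∃ q ∈ Q, ∃ v ∈ F, d = q - v}

def normCone (Q F : Set V) : Set V := {y | ∀ v ∈ F, ∀ q ∈ Q, ⟪y, q⟫ ≤ ⟪y, v⟫}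

def IsExtDef (Q P : Set V) : Prop :=
  IsPolyhedron P ∧ ∀ F : Set V, IsFace P F → ∃ 𝒢 : Set (Set V),
    (∀ G ∈ 𝒢, IsFace Q G) ∧ normCone P F = ⋃ G ∈ 𝒢, normCone Q G

def lineal (C : Set V) : Set V := C ∩ (-C)

def transl (v : V) (C : Set V) : Set V := (fun x => v + x) '' C

def TightContains (C : Set V) (v : V) (P : Set V) : Prop :=
  P ⊆ transl v C ∧ (P ∩ transl v (lineal C)).Nonempty

/-- The set of all translates of tangent cones of `Q` (as subsets of `V`). -/
def TranslSet (Q : Set V) : Set (Set V) :=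
  {T : Set V | ∃ F v, IsFace Q F ∧ T = transl v (tanCone Q F)}

/-- `T` tightly contains `P` as a translated tangent cone of `Q`: for some representation
`T = C_F(Q) + v`, the translate `C_F(Q) + v` tightly contains `P`. -/
def TCtight (Q T P : Set V) : Prop :=
  ∃ F v, IsFace Q F ∧ T = transl v (tanCone Q F) ∧ TightContains (tanCone Q F) v P

/-- The indicator group of the family of extended deformations of `Q`. -/
noncomputable def indGroup (Q : Set V) : Submodule ℤ (V → ℤ) :=
  Submodule.span ℤ {f : V → ℤ | ∃ P, IsExtDef Q P ∧ f = indic P}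

set_option linter.unusedSectionVars false

/-! ### Euler characteristic of convex sets -/

theorem iv_pos {p : Prop} (h : p) : iv p = 1 := by simp [iv, h]

theorem iv_neg {p : Prop} (h : ¬ p) : iv p = 0 := by simp [iv, h]

theorem iv_congr {p q : Prop} (h : p ↔ q) : iv p = iv q := by rw [propext h]

theorem indic_apply {V : Type*} (P : Set V) (x : V) : indic P x = iv (x ∈ P) := by
  by_cases h : x ∈ P
  · simp [indic, iv, h]
  · simp [indic, iv, h]

/-- For compact intervals, the number of left endpoints at `t` is the jump from `u` to `t` of the
indicator function, for `u < t` close to `t`. -/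
theorem euler_left_endpoint {ι : Type*} (s : Finset ι) (a : ι → ℤ) (K : ι → Set ℝ)
    (hc : ∀ i ∈ s, IsCompact (K i)) (hv : ∀ i ∈ s, Convex ℝ (K i))
    (h : ∀ t, ∑ i ∈ s, a i * iv (t ∈ K i) = 0) (t : ℝ) :
    ∑ i ∈ s, a i * iv ((K i).Nonempty ∧ sInf (K i) = t) = 0 := by
  have key : ∀ i ∈ s, ∀ᶠ u in nhdsWithin t (Set.Iio t),
      iv ((K i).Nonempty ∧ sInf (K i) = t) = iv (t ∈ K i) - iv (u ∈ K i) := by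
    intro i hi
    by_cases hne : (K i).Nonempty
    · have hmem : sInf (K i) ∈ K i := (hc i hi).sInf_mem hne
      have hlb : ∀ x ∈ K i, sInf (K i) ≤ x := fun x hx => csInf_le (hc i hi).bddBelow hx
      have hoc := (hv i hi).ordConnected
      by_cases hl : sInf (K i) = t
      · filter_upwards [self_mem_nhdsWithin] with u hu
        have hu' : u < t := hu
        rw [iv_pos ⟨hne, hl⟩, iv_pos (hl ▸ hmem), iv_neg, sub_zero]
        intro hk
        have := hlb u hk
        linarith
      · by_cases ht : t ∈ K i
        · have hlt : sInf (K i) < t := lt_of_le_of_ne (hlb t ht) hl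
          filter_upwards [Ioo_mem_nhdsLT hlt] with u hu
          rw [iv_neg (fun h => hl h.2), iv_pos ht, iv_pos, sub_self]
          exact hoc.out hmem ht ⟨hu.1.le, hu.2.le⟩
        · have hopen : (K i)ᶜ ∈ nhds t := (hc i hi).isClosed.isOpen_compl.mem_nhds ht
          filter_upwards [mem_nhdsWithin_of_mem_nhds hopen] with u hu
          rw [iv_neg (fun h => hl h.2), iv_neg ht, iv_neg hu, sub_self]
    · refine Filter.Eventually.of_forall fun u => ?_
      rw [iv_neg (fun h => hne h.1), iv_neg (fun h => hne ⟨_, h⟩), iv_neg (fun h => hne ⟨_, h⟩),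
        sub_self]
  obtain ⟨u, hu⟩ := ((Filter.eventually_all_finset s).2 key).exists
  rw [Finset.sum_congr rfl fun i hi => by rw [hu i hi, mul_sub], Finset.sum_sub_distrib, h, h,
    sub_zero]

/-- The Euler characteristic in dimension one: count each nonempty compact interval by its left
endpoint. -/
theorem euler_real {ι : Type*} (s : Finset ι) (a : ι → ℤ) (K : ι → Set ℝ)
    (hc : ∀ i ∈ s, IsCompact (K i)) (hv : ∀ i ∈ s, Convex ℝ (K i))
    (h : ∀ t, ∑ i ∈ s, a i * iv (t ∈ K i) = 0) :
    ∑ i ∈ s, a i * iv (K i).Nonempty = 0 := by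
  classical
  have hsum : ∀ i ∈ s, iv (K i).Nonempty =
      ∑ t ∈ s.image (fun j => sInf (K j)), iv ((K i).Nonempty ∧ sInf (K i) = t) := by
    intro i hi
    rw [Finset.sum_eq_single_of_mem (sInf (K i)) (Finset.mem_image_of_mem (fun j => sInf (K j)) hi)]
    · exact iv_congr (by simp)
    · intro t _ ht
      exact iv_neg fun h => ht h.2.symm
  rw [Finset.sum_congr rfl fun i hi => by rw [hsum i hi, Finset.mul_sum], Finset.sum_comm]
  exact Finset.sum_eq_zero fun t _ => euler_left_endpoint s a K hc hv h t

section Families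

variable {ι : Type*}

/-- Slicing: if the signed count of nonempty sets vanishes on every fibre of the map
`z ↦ (⟪y, z⟫)_{y ∈ l}`, then it vanishes altogether. Each step of the induction projects the
slices to the line along one vector `y` and uses `euler_real` there. -/
theorem euler_fibers (l : List V) : ∀ (s : Finset ι) (a : ι → ℤ) (K : ι → Set V),
    (∀ i ∈ s, IsCompact (K i)) → (∀ i ∈ s, Convex ℝ (K i)) →
    (∀ x, ∑ i ∈ s, a i * iv (K i ∩ {z | ∀ y ∈ l, ⟪y, z⟫ = ⟪y, x⟫}).Nonempty = 0) →
    ∑ i ∈ s, a i * iv (K i).Nonempty = 0 := by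
  induction l with
  | nil =>
    intro s a K _ _ h
    simpa using h 0
  | cons y l ih =>
    intro s a K hc hv h
    refine ih s a K hc hv fun x => ?_
    set A : Set V := {z | ∀ y ∈ l, ⟪y, z⟫ = ⟪y, x⟫} with hA
    have hAc : IsClosed A := by
      simp only [hA, Set.ofPred_forall]
      exact isClosed_iInter fun y => isClosed_iInter fun _ =>
        isClosed_eq (by fun_prop) continuous_const
    have hAv : Convex ℝ A := by
      intro z hz z' hz' p q _ _ hpq y hy
      rw [inner_add_right, inner_smul_right, inner_smul_right, hz y hy, hz' y hy, ← add_mul, hpq,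
        one_mul]
    have := euler_real s a (fun i => (innerₛₗ ℝ y) '' (K i ∩ A))
      (fun i hi => ((hc i hi).inter_right hAc).image (by
        exact (innerSL ℝ y).continuous))
      (fun i hi => ((hv i hi).inter hAv).linear_image _) ?_
    · simpa only [Set.image_nonempty] using this
    · intro t
      by_cases hx : ∃ x' ∈ A, ⟪y, x'⟫ = t
      · obtain ⟨x', hx', rfl⟩ := hx
        rw [← h x']
        refine Finset.sum_congr rfl fun i _ => ?_
        congr 1
        refine iv_congr ⟨?_, ?_⟩
        · rintro ⟨z, ⟨hz, hzA⟩, hzy⟩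
          refine ⟨z, hz, ?_⟩
          intro u hu
          rcases List.mem_cons.1 hu with rfl | hu
          · exact hzy
          · rw [hzA u hu, hx' u hu]
        · rintro ⟨z, hz, hzA⟩
          refine ⟨z, ⟨hz, fun u hu => ?_⟩, hzA y (by simp)⟩
          rw [hzA u (by simp [hu]), hx' u hu]
      · refine Finset.sum_eq_zero fun i _ => ?_
        rw [iv_neg, mul_zero]
        rintro ⟨z, ⟨_, hzA⟩, hzy⟩
        exact hx ⟨z, hzA, hzy⟩

/-- The Euler characteristic of compact convex sets: every linear relation between indicator
functions is also satisfied by the function that is `1` on nonempty sets and `0` on `∅`. -/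
theorem euler_compact (s : Finset ι) (a : ι → ℤ) (K : ι → Set V)
    (hc : ∀ i ∈ s, IsCompact (K i)) (hv : ∀ i ∈ s, Convex ℝ (K i))
    (h : ∀ x, ∑ i ∈ s, a i * iv (x ∈ K i) = 0) :
    ∑ i ∈ s, a i * iv (K i).Nonempty = 0 := by
  let b := stdOrthonormalBasis ℝ V
  refine euler_fibers (List.ofFn b) s a K hc hv fun x => ?_
  rw [← h x]
  refine Finset.sum_congr rfl fun i _ => ?_
  congr 1
  have : {z | ∀ y ∈ List.ofFn b, ⟪y, z⟫ = ⟪y, x⟫} = {x} := by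
    ext z
    simp only [Set.mem_ofPred_eq, Set.mem_singleton_iff]
    refine ⟨fun hz => b.repr.injective (PiLp.ext fun i => ?_), fun hz => by simp [hz]⟩
    simpa [b.repr_apply_apply] using hz (b i) (by simp [List.mem_ofFn])
  rw [this]
  exact iv_congr (by simp)

/-- `euler_compact` for closed convex sets, by intersecting with a large ball. -/
theorem euler_closed (s : Finset ι) (a : ι → ℤ) (K : ι → Set V)
    (hc : ∀ i ∈ s, IsClosed (K i)) (hv : ∀ i ∈ s, Convex ℝ (K i))
    (h : ∀ x, ∑ i ∈ s, a i * iv (x ∈ K i) = 0) :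
    ∑ i ∈ s, a i * iv (K i).Nonempty = 0 := by
  have key : ∀ i ∈ s, ∀ᶠ R : ℝ in Filter.atTop,
      iv (K i).Nonempty = iv (K i ∩ Metric.closedBall 0 R).Nonempty := by
    intro i _
    by_cases hne : (K i).Nonempty
    · obtain ⟨x, hx⟩ := hne
      filter_upwards [Filter.eventually_ge_atTop ‖x‖] with R hR
      rw [iv_pos ⟨x, hx⟩, iv_pos ⟨x, hx, by simpa using hR⟩]
    · refine Filter.Eventually.of_forall fun R => ?_
      rw [iv_neg hne, iv_neg fun h => hne (h.mono Set.inter_subset_left)]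
  obtain ⟨R, hR⟩ := ((Filter.eventually_all_finset s).2 key).exists
  rw [Finset.sum_congr rfl fun i hi => by rw [hR i hi]]
  refine euler_compact s a _ (fun i hi => (isCompact_closedBall 0 R).inter_left (hc i hi))
    (fun i hi => (hv i hi).inter (convex_closedBall 0 R)) fun x => ?_
  by_cases hx : x ∈ Metric.closedBall (0 : V) R
  · rw [← h x]
    exact Finset.sum_congr rfl fun i _ => by
      rw [iv_congr (Set.mem_inter_iff _ _ _), iv_congr (and_iff_left hx)]
  · exact Finset.sum_eq_zero fun i _ => by rw [iv_neg fun h => hx h.2, mul_zero]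

/-- The condition that `K` meets `v + Sᗮ` and lies in the half-space `⟪y, ·⟫ ≤ ⟪y, v⟫` respects
linear relations between indicator functions. It is the difference of two conditions of the form
`K ∩ A ≠ ∅` with `A` closed and convex: `A = v + Sᗮ`, and `A` the part at height `⟪y, v⟫ + ε` of a
`δ`-neighbourhood of `v + Sᗮ`, with `0 < ε ≪ δ ≪ 1`. -/
theorem euler_tight_compact (s : Finset ι) (a : ι → ℤ) (K : ι → Set V)
    (hc : ∀ i ∈ s, IsCompact (K i)) (hv : ∀ i ∈ s, Convex ℝ (K i))
    (h : ∀ x, ∑ i ∈ s, a i * iv (x ∈ K i) = 0)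
    (S : Submodule ℝ V) (y v : V) (hy : y ∈ S) :
    ∑ i ∈ s, a i * iv ((∃ w ∈ K i, w - v ∈ Sᗮ) ∧ ∀ p ∈ K i, ⟪y, p⟫ ≤ ⟪y, v⟫) = 0 := by
  -- `N x` is the distance from `x` to `v + Sᗮ`.
  set N : V → ℝ := fun x => ‖S.starProjection (x - v)‖ with hN
  have hNcont : Continuous N := by fun_prop
  have hN0 : ∀ x, N x = 0 ↔ x - v ∈ Sᗮ := fun x => by
    rw [hN, norm_eq_zero, Submodule.starProjection_apply_eq_zero_iff]
  have hyv : ∀ w, w - v ∈ Sᗮ → ⟪y, w⟫ = ⟪y, v⟫ := fun w hw => by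
    have := (Submodule.mem_orthogonal S _).1 hw y hy
    rw [inner_sub_right] at this
    linarith
  have inter_sum : ∀ A : Set V, IsClosed A → Convex ℝ A →
      ∑ i ∈ s, a i * iv (K i ∩ A).Nonempty = 0 := by
    intro A hA hA'
    refine euler_compact s a _ (fun i hi => (hc i hi).inter_right hA)
      (fun i hi => (hv i hi).inter hA') fun x => ?_
    by_cases hx : x ∈ A
    · rw [← h x]
      exact Finset.sum_congr rfl fun i _ => by
        rw [iv_congr (Set.mem_inter_iff _ _ _), iv_congr (and_iff_left hx)]
    · exact Finset.sum_eq_zero fun i _ => by rw [iv_neg fun h => hx h.2, mul_zero]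
  have hNconv : ∀ δ, Convex ℝ {x | N x ≤ δ} := by
    intro δ x hx z hz p q hp hq hpq
    have e : p • x + q • z - v = p • (x - v) + q • (z - v) := by
      have : v = p • v + q • v := by rw [← add_smul, hpq, one_smul]
      nth_rewrite 1 [this]
      module
    have hx' : N x ≤ δ := hx
    have hz' : N z ≤ δ := hz
    change N _ ≤ δ
    calc N (p • x + q • z) = ‖p • S.starProjection (x - v) + q • S.starProjection (z - v)‖ := by
          simp only [hN, e, map_add, map_smul]
      _ ≤ p * N x + q * N z := by
          refine (norm_add_le _ _).trans (le_of_eq ?_)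
          rw [norm_smul, norm_smul, Real.norm_of_nonneg hp, Real.norm_of_nonneg hq]
      _ ≤ p * δ + q * δ := by gcongr
      _ = δ := by rw [← add_mul, hpq, one_mul]
  have hδ : ∀ i ∈ s, ∀ᶠ δ in nhdsWithin (0 : ℝ) (Set.Ioi 0),
      (K i ∩ {x | N x ≤ δ}).Nonempty → ∃ w ∈ K i, w - v ∈ Sᗮ := by
    intro i hi
    by_cases hne : (K i).Nonempty
    · obtain ⟨w, hw, hmin⟩ := (hc i hi).exists_isMinOn hne hNcont.continuousOn
      by_cases hw0 : w - v ∈ Sᗮ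
      · exact Filter.Eventually.of_forall fun _ _ => ⟨w, hw, hw0⟩
      · have hpos : 0 < N w := lt_of_le_of_ne (norm_nonneg _) fun e => hw0 ((hN0 w).1 e.symm)
        filter_upwards [Ioo_mem_nhdsGT hpos] with δ hδ
        rintro ⟨x, hx, hxδ⟩
        have h1 : N w ≤ N x := hmin hx
        have h2 : N x ≤ δ := hxδ
        linarith [hδ.2]
    · exact Filter.Eventually.of_forall fun _ h => (hne (h.mono Set.inter_subset_left)).elim
  obtain ⟨δ, hδ, hδ0⟩ := (((Filter.eventually_all_finset s).2 hδ).and self_mem_nhdsWithin).exists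
  have hδ0 : 0 < δ := hδ0
  have hε : ∀ i ∈ s, ∀ᶠ ε in nhdsWithin (0 : ℝ) (Set.Ioi 0),
      (∃ w ∈ K i, w - v ∈ Sᗮ) → (∃ p ∈ K i, ⟪y, v⟫ < ⟪y, p⟫) →
      ∃ x ∈ K i, N x ≤ δ ∧ ⟪y, x⟫ = ⟪y, v⟫ + ε := by
    intro i hi
    by_cases h1 : ∃ w ∈ K i, w - v ∈ Sᗮ
    swap
    · exact Filter.Eventually.of_forall fun _ h => (h1 h).elim
    by_cases h2 : ∃ p ∈ K i, ⟪y, v⟫ < ⟪y, p⟫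
    swap
    · exact Filter.Eventually.of_forall fun _ _ h => (h2 h).elim
    obtain ⟨w, hw, hwv⟩ := h1
    obtain ⟨p, hp, hpv⟩ := h2
    set c := ⟪y, p⟫ - ⟪y, v⟫ with hcdef
    have hcpos : 0 < c := by rw [hcdef]; linarith
    have hNp : 0 ≤ N p := norm_nonneg _
    have hlim : 0 < min c (δ * c / (N p + 1)) := by positivity
    filter_upwards [Ioo_mem_nhdsGT hlim] with ε hε _ _
    have hε1 : ε ≤ c := hε.2.le.trans (min_le_left _ _)
    have hε2 : ε * (N p + 1) ≤ δ * c :=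
      (le_div_iff₀ (by positivity)).1 (hε.2.le.trans (min_le_right _ _))
    have hε0 : 0 < ε := hε.1
    -- The point at height `⟪y, v⟫ + ε` on the segment from `w` to `p`.
    set t := ε / c with ht
    have ht0 : 0 ≤ t := by positivity
    have ht1 : t ≤ 1 := (div_le_one hcpos).2 hε1
    have htc : t * c = ε := div_mul_cancel₀ _ hcpos.ne'
    refine ⟨(1 - t) • w + t • p, hv i hi hw hp (by linarith) ht0 (by ring), ?_, ?_⟩
    · have e : (1 - t) • w + t • p - v = (1 - t) • (w - v) + t • (p - v) := by module
      have : N ((1 - t) • w + t • p) = t * N p := by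
        simp only [hN, e, map_add, map_smul]
        rw [(Submodule.starProjection_apply_eq_zero_iff S).2 hwv, smul_zero, zero_add, norm_smul,
          Real.norm_of_nonneg ht0]
      rw [this]
      have h3 : t * N p * c ≤ δ * c := by
        calc t * N p * c = ε * N p := by rw [← htc]; ring
          _ ≤ ε * (N p + 1) := by nlinarith
          _ ≤ δ * c := hε2
      exact le_of_mul_le_mul_right h3 hcpos
    · rw [inner_add_right, inner_smul_right, inner_smul_right, hyv w hwv]
      rw [← htc, hcdef]
      ring
  obtain ⟨ε, hε, hε0⟩ := (((Filter.eventually_all_finset s).2 hε).and self_mem_nhdsWithin).exists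
  have hε0 : 0 < ε := hε0
  have hA := inter_sum {x | N x ≤ 0} (isClosed_le hNcont continuous_const) (hNconv 0)
  have hB := inter_sum ({x | N x ≤ δ} ∩ {x | ⟪y, x⟫ = ⟪y, v⟫ + ε})
    ((isClosed_le hNcont continuous_const).inter (isClosed_eq (by fun_prop) continuous_const))
    ((hNconv δ).inter (by
      intro x hx z hz p q _ _ hpq
      have hx' : ⟪y, x⟫ = ⟪y, v⟫ + ε := hx
      have hz' : ⟪y, z⟫ = ⟪y, v⟫ + ε := hz
      change ⟪y, _⟫ = _
      rw [inner_add_right, inner_smul_right, inner_smul_right, hx', hz', ← add_mul, hpq, one_mul]))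
  refine Eq.trans ?_ ((congrArg₂ (· - ·) hA hB).trans (sub_zero 0))
  rw [← Finset.sum_sub_distrib]
  refine Finset.sum_congr rfl fun i hi => ?_
  rw [← mul_sub]
  congr 1
  have hAiff : (K i ∩ {x | N x ≤ 0}).Nonempty ↔ ∃ w ∈ K i, w - v ∈ Sᗮ := by
    refine exists_congr fun w => and_congr_right fun _ => ?_
    rw [← hN0]
    exact ⟨fun h => le_antisymm h (norm_nonneg _), fun h => le_of_eq h⟩
  by_cases h1 : ∃ w ∈ K i, w - v ∈ Sᗮ
  · rw [iv_pos (hAiff.2 h1)]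
    by_cases h2 : ∃ p ∈ K i, ⟪y, v⟫ < ⟪y, p⟫
    · obtain ⟨x, hx, hx1, hx2⟩ := hε i hi h1 h2
      have h3 : ¬ ∀ p ∈ K i, ⟪y, p⟫ ≤ ⟪y, v⟫ := by
        push Not
        exact h2
      rw [iv_neg fun h => h3 h.2, iv_pos ⟨x, hx, hx1, hx2⟩, sub_self]
    · push Not at h2
      rw [iv_pos ⟨h1, h2⟩, iv_neg, sub_zero]
      rintro ⟨x, hx, _, hx2⟩
      have hx2 : ⟪y, x⟫ = ⟪y, v⟫ + ε := hx2
      linarith [h2 x hx]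
  · rw [iv_neg fun h => h1 h.1, iv_neg fun h => h1 (hAiff.1 h), iv_neg, sub_self]
    rintro ⟨x, hx, hx1, _⟩
    exact h1 (hδ i hi ⟨x, hx, hx1⟩)

theorem euler_tight (s : Finset ι) (a : ι → ℤ) (K : ι → Set V)
    (hc : ∀ i ∈ s, IsClosed (K i)) (hv : ∀ i ∈ s, Convex ℝ (K i))
    (h : ∀ x, ∑ i ∈ s, a i * iv (x ∈ K i) = 0)
    (S : Submodule ℝ V) (y v : V) (hy : y ∈ S) :
    ∑ i ∈ s, a i * iv ((∃ w ∈ K i, w - v ∈ Sᗮ) ∧ ∀ p ∈ K i, ⟪y, p⟫ ≤ ⟪y, v⟫) = 0 := by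
  have hev : ∀ p : Set V, ∀ᶠ R : ℝ in Filter.atTop,
      (p ∩ Metric.closedBall 0 R).Nonempty ↔ p.Nonempty := by
    intro p
    by_cases hne : p.Nonempty
    · obtain ⟨x, hx⟩ := hne
      filter_upwards [Filter.eventually_ge_atTop ‖x‖] with R hR
      exact ⟨fun _ => ⟨x, hx⟩, fun _ => ⟨x, hx, by simpa using hR⟩⟩
    · exact Filter.Eventually.of_forall fun R =>
        ⟨fun h => h.mono Set.inter_subset_left, fun h => (hne h).elim⟩
  have key : ∀ i ∈ s, ∀ᶠ R : ℝ in Filter.atTop,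
      iv ((∃ w ∈ K i, w - v ∈ Sᗮ) ∧ ∀ p ∈ K i, ⟪y, p⟫ ≤ ⟪y, v⟫) =
      iv ((∃ w ∈ K i ∩ Metric.closedBall 0 R, w - v ∈ Sᗮ) ∧
        ∀ p ∈ K i ∩ Metric.closedBall 0 R, ⟪y, p⟫ ≤ ⟪y, v⟫) := by
    intro i _
    filter_upwards [hev {w | w ∈ K i ∧ w - v ∈ Sᗮ}, hev {p | p ∈ K i ∧ ⟪y, v⟫ < ⟪y, p⟫}]
      with R h1 h2
    refine iv_congr (and_congr ?_ ?_)
    · refine Iff.trans h1.symm (exists_congr fun w => ?_)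
      simp only [Set.mem_inter_iff, Set.mem_ofPred_eq]
      tauto
    · refine not_iff_not.1 ?_
      push Not
      refine Iff.trans h2.symm (exists_congr fun w => ?_)
      simp only [Set.mem_inter_iff, Set.mem_ofPred_eq]
      tauto
  obtain ⟨R, hR⟩ := ((Filter.eventually_all_finset s).2 key).exists
  rw [Finset.sum_congr rfl fun i hi => by rw [hR i hi]]
  refine euler_tight_compact s a _ (fun i hi => (isCompact_closedBall 0 R).inter_left (hc i hi))
    (fun i hi => (hv i hi).inter (convex_closedBall 0 R)) (fun x => ?_) S y v hy
  by_cases hx : x ∈ Metric.closedBall (0 : V) R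
  · rw [← h x]
    exact Finset.sum_congr rfl fun i _ => by
      rw [iv_congr (Set.mem_inter_iff _ _ _), iv_congr (and_iff_left hx)]
  · exact Finset.sum_eq_zero fun i _ => by rw [iv_neg fun h => hx h.2, mul_zero]

end Families

/-! ### Linear programming on polyhedra -/

theorem IsPolyhedron.isClosed {P : Set V} (hP : IsPolyhedron P) : IsClosed P := by
  obtain ⟨_, s, rfl⟩ := hP
  simp only [Set.ofPred_forall]
  exact isClosed_iInter fun p => isClosed_iInter fun _ =>
    isClosed_le (by fun_prop) continuous_const

theorem convex_inner_le (y : V) (c : ℝ) : Convex ℝ {x : V | ⟪y, x⟫ ≤ c} :=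
  convex_halfSpace_le (innerₛₗ ℝ y).isLinear c

theorem IsPolyhedron.convex {P : Set V} (hP : IsPolyhedron P) : Convex ℝ P := by
  obtain ⟨_, s, rfl⟩ := hP
  simp only [Set.ofPred_forall]
  exact convex_iInter fun p => convex_iInter fun _ => convex_inner_le p.1 p.2

open Classical in
/-- The inequalities `⟪p.1, ·⟫ ≤ p.2` of the system `s` that hold with equality at `x`. -/
noncomputable def act (s : Finset (V × ℝ)) (x : V) : Finset (V × ℝ) :=
  s.filter fun p => ⟪p.1, x⟫ = p.2

theorem mem_act {s : Finset (V × ℝ)} {x : V} {p : V × ℝ} :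
    p ∈ act s x ↔ p ∈ s ∧ ⟪p.1, x⟫ = p.2 := by
  classical
  simp [act]

/-- If `y` is bounded above on the polyhedron given by `s`, any point of it can be moved, without
decreasing `y`, to one where `y` is in the span of the active normals: as long as it is not, move
in a direction orthogonal to these normals in which `y` increases, until a new inequality becomes
active. -/
theorem lp_improve (s : Finset (V × ℝ)) (y : V) (c : ℝ)
    (hb : ∀ x, (∀ p ∈ s, ⟪p.1, x⟫ ≤ p.2) → ⟪y, x⟫ ≤ c) (n : ℕ) :
    ∀ x, (∀ p ∈ s, ⟪p.1, x⟫ ≤ p.2) → s.card - (act s x).card = n →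
      ∃ z, (∀ p ∈ s, ⟪p.1, z⟫ ≤ p.2) ∧ ⟪y, x⟫ ≤ ⟪y, z⟫ ∧
        y ∈ Submodule.span ℝ (Prod.fst '' (act s z : Set (V × ℝ))) := by
  classical
  induction n using Nat.strong_induction_on with
  | _ n ih =>
    intro x hx hn
    set S := Submodule.span ℝ (Prod.fst '' (act s x : Set (V × ℝ))) with hS
    by_cases hy : y ∈ S
    · exact ⟨x, hx, le_rfl, hy⟩
    set d := y - S.starProjection y with hd
    have hdS : d ∈ Sᗮ := S.sub_starProjection_mem_orthogonal y
    have hd0 : d ≠ 0 := by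
      intro h
      apply hy
      rw [sub_eq_zero.1 h]
      exact S.starProjection_apply_mem y
    have hyd : 0 < ⟪y, d⟫ := by
      have h1 : ⟪S.starProjection y, d⟫ = 0 :=
        (Submodule.mem_orthogonal S d).1 hdS _ (S.starProjection_apply_mem y)
      have h2 : ⟪y, d⟫ = ⟪d, d⟫ := by
        nth_rewrite 2 [hd]
        rw [inner_sub_left, h1, sub_zero]
      rw [h2]
      exact real_inner_self_pos.2 hd0
    have hact : ∀ p ∈ act s x, ⟪p.1, d⟫ = 0 := fun p hp =>
      (Submodule.mem_orthogonal S d).1 hdS _ (Submodule.subset_span ⟨p, hp, rfl⟩)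
    set J := s.filter fun p => 0 < ⟪p.1, d⟫ with hJ
    have hJmem : ∀ p, p ∈ J ↔ p ∈ s ∧ 0 < ⟪p.1, d⟫ := fun p => by simp [hJ]
    rcases J.eq_empty_or_nonempty with hJe | hJn
    · exfalso
      have hr : 0 ≤ (c - ⟪y, x⟫ + 1) / ⟪y, d⟫ := by
        have := hb x hx
        apply div_nonneg <;> linarith
      have := hb (x + ((c - ⟪y, x⟫ + 1) / ⟪y, d⟫) • d) (by
        intro p hp
        have h1 : ⟪p.1, d⟫ ≤ 0 := by
          by_contra h
          have : p ∈ J := (hJmem p).2 ⟨hp, not_le.1 h⟩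
          rw [hJe] at this
          simp at this
        rw [inner_add_right, inner_smul_right]
        have := hx p hp
        have := mul_nonpos_of_nonneg_of_nonpos hr h1
        linarith)
      rw [inner_add_right, inner_smul_right, div_mul_cancel₀ _ hyd.ne'] at this
      linarith
    · obtain ⟨p0, hp0, hmin⟩ := J.exists_min_image (fun p => (p.2 - ⟪p.1, x⟫) / ⟪p.1, d⟫) hJn
      obtain ⟨hp0s, hp0d⟩ := (hJmem p0).1 hp0
      set t := (p0.2 - ⟪p0.1, x⟫) / ⟪p0.1, d⟫ with ht
      have ht0 : 0 ≤ t := by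
        have := hx p0 hp0s
        apply div_nonneg <;> linarith
      have hz : ∀ p ∈ s, ⟪p.1, x + t • d⟫ ≤ p.2 := by
        intro p hp
        rw [inner_add_right, inner_smul_right]
        by_cases h : 0 < ⟪p.1, d⟫
        · have h1 := hmin p ((hJmem p).2 ⟨hp, h⟩)
          have h2 := (le_div_iff₀ h).1 h1
          linarith
        · have := hx p hp
          have := mul_nonpos_of_nonneg_of_nonpos ht0 (not_lt.1 h)
          linarith
      have hsub : act s x ⊂ act s (x + t • d) := by
        refine Finset.ssubset_iff_subset_ne.2 ⟨?_, ?_⟩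
        · intro p hp
          refine mem_act.2 ⟨(mem_act.1 hp).1, ?_⟩
          rw [inner_add_right, inner_smul_right, hact p hp, mul_zero, add_zero, (mem_act.1 hp).2]
        · intro he
          have : p0 ∈ act s (x + t • d) := by
            refine mem_act.2 ⟨hp0s, ?_⟩
            rw [inner_add_right, inner_smul_right, ht, div_mul_cancel₀ _ hp0d.ne']
            ring
          rw [← he] at this
          exact hp0d.ne' (hact p0 this)
      have hlt := Finset.card_lt_card hsub
      have hle : (act s (x + t • d)).card ≤ s.card :=
        Finset.card_le_card fun p hp => (mem_act.1 hp).1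
      obtain ⟨z, hz1, hz2, hz3⟩ := ih _ (by omega) _ hz rfl
      refine ⟨z, hz1, le_trans ?_ hz2, hz3⟩
      rw [inner_add_right, inner_smul_right]
      have := mul_nonneg ht0 hyd.le
      linarith

/-- A linear functional bounded above on a polyhedron attains its maximum. The value of `y` at the
points supplied by `lp_improve` depends only on the active set, so only finitely many values
occur. -/
theorem IsPolyhedron.exists_max {P : Set V} (hP : IsPolyhedron P) (y : V) (c : ℝ)
    (hb : ∀ p ∈ P, ⟪y, p⟫ ≤ c) : ∃ w ∈ P, ∀ p ∈ P, ⟪y, p⟫ ≤ ⟪y, w⟫ := by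
  classical
  obtain ⟨⟨x0, hx0⟩, s, rfl⟩ := hP
  set Z : Set V := {z | (∀ p ∈ s, ⟪p.1, z⟫ ≤ p.2) ∧
    y ∈ Submodule.span ℝ (Prod.fst '' (act s z : Set (V × ℝ)))} with hZ
  have himp : ∀ x, (∀ p ∈ s, ⟪p.1, x⟫ ≤ p.2) → ∃ z ∈ Z, ⟪y, x⟫ ≤ ⟪y, z⟫ := by
    intro x hx
    obtain ⟨z, h1, h2, h3⟩ := lp_improve s y c hb _ x hx rfl
    exact ⟨z, ⟨h1, h3⟩, h2⟩
  have hval : ∀ z ∈ Z, ∀ z' ∈ Z, act s z = act s z' → ⟪y, z⟫ = ⟪y, z'⟫ := by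
    intro z hz z' _ he
    have hle : Submodule.span ℝ (Prod.fst '' (act s z : Set (V × ℝ))) ≤ (ℝ ∙ (z - z'))ᗮ := by
      rw [Submodule.span_le]
      rintro _ ⟨p, hp, rfl⟩
      have h1 := (mem_act.1 hp).2
      have hp' : p ∈ act s z' := he ▸ hp
      have h2 := (mem_act.1 hp').2
      refine Submodule.mem_orthogonal_singleton_iff_inner_left.2 ?_
      rw [inner_sub_right, h1, h2, sub_self]
    have := Submodule.mem_orthogonal_singleton_iff_inner_left.1 (hle hz.2)
    rw [inner_sub_right] at this
    linarith
  have hfin : ((fun z => ⟪y, z⟫) '' Z).Finite := by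
    have h1 : ((fun z => act s z) '' Z).Finite :=
      (s.powerset.finite_toSet).subset (by
        rintro _ ⟨z, _, rfl⟩
        exact Finset.mem_coe.2 (Finset.mem_powerset.2 fun p hp => (mem_act.1 hp).1))
    choose! g hg using fun (A : Finset (V × ℝ)) (hA : A ∈ (fun z => act s z) '' Z) => hA
    refine (h1.image fun A => ⟪y, g A⟫).subset ?_
    rintro _ ⟨z, hz, rfl⟩
    have hz' : act s z ∈ (fun z => act s z) '' Z := ⟨z, hz, rfl⟩
    exact ⟨act s z, hz', hval _ (hg _ hz').1 _ hz (hg _ hz').2⟩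
  obtain ⟨z0, hz0, _⟩ := himp x0 hx0
  obtain ⟨_, ⟨w, hw, rfl⟩, hmax⟩ := Set.exists_max_image _ id hfin ⟨_, z0, hz0, rfl⟩
  refine ⟨w, hw.1, fun p hp => ?_⟩
  obtain ⟨z, hz, hpz⟩ := himp p hp
  exact hpz.trans (hmax _ ⟨z, hz, rfl⟩)

/-! ### Tangent cones of polyhedra -/

theorem coneGen_isConvexCone (S : Set V) : IsConvexCone (coneGen S) := by
  refine ⟨fun C hC => hC.1.1, convex_sInter fun C hC => hC.1.2.1, fun c hc x hx C hC =>
    hC.1.2.2 c hc x (hx C hC)⟩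

theorem subset_coneGen (S : Set V) : S ⊆ coneGen S := fun _ hx _ hC => hC.2 hx

theorem polar_isConvexCone (N : Set V) : IsConvexCone {d : V | ∀ y ∈ N, ⟪y, d⟫ ≤ 0} := by
  refine ⟨fun y _ => by simp, ?_, ?_⟩
  · simp only [Set.ofPred_forall]
    exact convex_iInter fun y => convex_iInter fun _ => convex_inner_le y 0
  · intro c hc x hx y hy
    rw [inner_smul_right]
    exact mul_nonpos_of_nonneg_of_nonpos hc (hx y hy)

/-- A face has a point at which only those inequalities are active that are active on all of it:
take a point with the fewest active inequalities. -/
theorem face_point (s : Finset (V × ℝ)) (F : Set V)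
    (hF : IsFace {x | ∀ p ∈ s, ⟪p.1, x⟫ ≤ p.2} F) :
    ∃ x0 ∈ F, ∀ p ∈ act s x0, ∀ x ∈ F, ⟪p.1, x⟫ = p.2 := by
  obtain ⟨y, hne, hFe⟩ := hF
  set x0 := Function.argminOn (fun x => (act s x).card) F hne with hx0def
  have hx0 : x0 ∈ F := Function.argminOn_mem _ F hne
  have hmin : ∀ x ∈ F, (act s x0).card ≤ (act s x).card := fun x hx =>
    Function.argminOn_le (fun x => (act s x).card) F hx
  refine ⟨x0, hx0, fun p hp x hx => ?_⟩
  have hm : (1 / 2 : ℝ) • x0 + (1 / 2 : ℝ) • x ∈ F := by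
    rw [hFe] at hx0 hx ⊢
    refine ⟨fun q hq => ?_, fun q hq => ?_⟩
    · rw [inner_add_right, inner_smul_right, inner_smul_right]
      linarith [hx0.1 q hq, hx.1 q hq]
    · rw [inner_add_right, inner_smul_right, inner_smul_right]
      linarith [hx0.2 q hq, hx.2 q hq]
  have hboth : ∀ q ∈ act s ((1 / 2 : ℝ) • x0 + (1 / 2 : ℝ) • x),
      ⟪q.1, x0⟫ = q.2 ∧ ⟪q.1, x⟫ = q.2 := by
    intro q hq
    obtain ⟨hqs, hqe⟩ := mem_act.1 hq
    rw [inner_add_right, inner_smul_right, inner_smul_right] at hqe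
    rw [hFe] at hx0 hx
    have h1 := hx0.1 q hqs
    have h2 := hx.1 q hqs
    constructor <;> linarith
  have hsub : act s ((1 / 2 : ℝ) • x0 + (1 / 2 : ℝ) • x) ⊆ act s x0 := fun q hq =>
    mem_act.2 ⟨(mem_act.1 hq).1, (hboth q hq).1⟩
  rw [← Finset.eq_of_subset_of_card_le hsub (hmin _ hm)] at hp
  exact (hboth p hp).2

/-- The tangent cone at `F` is cut out by the inequalities active on `F`, whose normals are in the
normal cone, and near a suitable `x0 ∈ F` it coincides with `Q - x0`. -/
theorem tanCone_struct (s : Finset (V × ℝ)) (Q F : Set V) (hQ : Q = {x | ∀ p ∈ s, ⟪p.1, x⟫ ≤ p.2})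
    (hF : IsFace Q F) :
    ∃ x0 ∈ F, ∃ A ⊆ s, tanCone Q F = {d | ∀ p ∈ A, ⟪p.1, d⟫ ≤ 0} ∧
      (∀ p ∈ A, p.1 ∈ normCone Q F) ∧ ∀ d ∈ tanCone Q F, ∃ ε > (0 : ℝ), x0 + ε • d ∈ Q := by
  subst hQ
  obtain ⟨x0, hx0, hact⟩ := face_point s F hF
  have hFQ : F ⊆ {x | ∀ p ∈ s, ⟪p.1, x⟫ ≤ p.2} := by
    obtain ⟨y, _, hFe⟩ := hF
    rw [hFe]
    exact fun x hx => hx.1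
  have hmove : ∀ d, (∀ p ∈ act s x0, ⟪p.1, d⟫ ≤ 0) →
      ∃ ε > (0 : ℝ), x0 + ε • d ∈ {x | ∀ p ∈ s, ⟪p.1, x⟫ ≤ p.2} := by
    intro d hd
    have : ∀ p ∈ s, ∀ᶠ ε in nhdsWithin (0 : ℝ) (Set.Ioi 0), ⟪p.1, x0 + ε • d⟫ ≤ p.2 := by
      intro p hp
      by_cases hpa : ⟪p.1, x0⟫ = p.2
      · filter_upwards [self_mem_nhdsWithin] with ε hε
        rw [inner_add_right, inner_smul_right, hpa]
        have := mul_nonpos_of_nonneg_of_nonpos (le_of_lt hε) (hd p (mem_act.2 ⟨hp, hpa⟩))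
        linarith
      · have hlt : ⟪p.1, x0⟫ < p.2 := lt_of_le_of_ne (hFQ hx0 p hp) hpa
        have hcont : Continuous fun ε : ℝ => ⟪p.1, x0 + ε • d⟫ := by fun_prop
        have := hcont.continuousAt.eventually_lt (x₀ := 0) continuousAt_const (by simpa using hlt)
        filter_upwards [mem_nhdsWithin_of_mem_nhds this] with ε hε
        exact le_of_lt hε
    obtain ⟨ε, h1, h2⟩ := (((Filter.eventually_all_finset s).2 this).and self_mem_nhdsWithin).exists
    exact ⟨ε, h2, h1⟩
  have heq : tanCone {x | ∀ p ∈ s, ⟪p.1, x⟫ ≤ p.2} F = {d | ∀ p ∈ act s x0, ⟪p.1, d⟫ ≤ 0} := by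
    apply Set.Subset.antisymm
    · intro d hd
      have hcone := polar_isConvexCone (Prod.fst '' (act s x0 : Set (V × ℝ)))
      have := hd _ ⟨hcone, ?_⟩
      · intro p hp
        exact this p.1 ⟨p, hp, rfl⟩
      · rintro _ ⟨q, hq, v, hv, rfl⟩ _ ⟨p, hp, rfl⟩
        rw [inner_sub_right, hact p hp v hv, sub_nonpos]
        exact hq p (mem_act.1 hp).1
    · intro d hd
      obtain ⟨ε, hε, hmem⟩ := hmove d hd
      have h1 : ε • d ∈ tanCone {x | ∀ p ∈ s, ⟪p.1, x⟫ ≤ p.2} F :=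
        subset_coneGen _ ⟨_, hmem, x0, hx0, by simp⟩
      have h2 := (coneGen_isConvexCone _).2.2 ε⁻¹ (inv_nonneg.2 hε.le) _ h1
      rwa [smul_smul, inv_mul_cancel₀ hε.ne', one_smul] at h2
  refine ⟨x0, hx0, act s x0, fun p hp => (mem_act.1 hp).1, heq, ?_, ?_⟩
  · intro p hp v hv q hq
    rw [hact p hp v hv]
    exact hq p (mem_act.1 hp).1
  · intro d hd
    rw [heq] at hd
    exact hmove d hd

theorem inner_nonpos_of_mem {Q F : Set V} {y d : V} (hy : y ∈ normCone Q F)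
    (hd : d ∈ tanCone Q F) : ⟪y, d⟫ ≤ 0 := by
  refine hd _ ⟨polar_isConvexCone (normCone Q F), ?_⟩ y hy
  rintro _ ⟨q, hq, v, hv, rfl⟩ z hz
  rw [inner_sub_right, sub_nonpos]
  exact hz v hv q hq

/-- The tangent cone is the polar of the normal cone. -/
theorem mem_tanCone_iff {Q F : Set V} (hQ : IsPolyhedron Q) (hF : IsFace Q F) {d : V} :
    d ∈ tanCone Q F ↔ ∀ y ∈ normCone Q F, ⟪y, d⟫ ≤ 0 := by
  obtain ⟨_, s, hs⟩ := hQ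
  obtain ⟨_, _, A, _, heq, hA, _⟩ := tanCone_struct s Q F hs hF
  refine ⟨fun hd y hy => inner_nonpos_of_mem hy hd, fun hd => ?_⟩
  rw [heq]
  exact fun p hp => hd _ (hA p hp)

/-! ### Translates of cones and tight containment -/

theorem mem_transl {v x : V} {C : Set V} : x ∈ transl v C ↔ x - v ∈ C := by
  constructor
  · rintro ⟨c, hc, rfl⟩
    simpa using hc
  · intro h
    exact ⟨x - v, h, by simp⟩

theorem IsConvexCone.add_mem {C : Set V} (hC : IsConvexCone C) {x y : V} (hx : x ∈ C)
    (hy : y ∈ C) : x + y ∈ C := by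
  have h1 : (1 / 2 : ℝ) • x + (1 / 2 : ℝ) • y ∈ C :=
    hC.2.1 hx hy (by norm_num) (by norm_num) (by norm_num)
  have h2 := hC.2.2 2 (by norm_num) _ h1
  rwa [show (2 : ℝ) • ((1 / 2 : ℝ) • x + (1 / 2 : ℝ) • y) = x + y by module] at h2

theorem tanCone_isConvexCone (Q F : Set V) : IsConvexCone (tanCone Q F) := coneGen_isConvexCone _

theorem self_mem_transl {C : Set V} (hC : IsConvexCone C) (v : V) : v ∈ transl v C :=
  mem_transl.2 (by simpa using hC.1)

theorem transl_subset {C : Set V} (hC : IsConvexCone C) {v w : V} (h : w ∈ transl v C) :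
    transl w C ⊆ transl v C := by
  intro x hx
  have := hC.add_mem (mem_transl.1 hx) (mem_transl.1 h)
  rw [sub_add_sub_cancel] at this
  exact mem_transl.2 this

theorem transl_eq {C : Set V} (hC : IsConvexCone C) {v w : V} (h1 : w ∈ transl v C)
    (h2 : v ∈ transl w C) : transl v C = transl w C :=
  (transl_subset hC h2).antisymm (transl_subset hC h1)

theorem cone_eq_of_transl_eq {C D : Set V} (hC : IsConvexCone C) (hD : IsConvexCone D) {v w : V}
    (h : transl v C = transl w D) : C = D := by
  have aux : ∀ {C D : Set V}, IsConvexCone C → IsConvexCone D → ∀ {v w : V},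
      transl v C = transl w D → C ⊆ D := by
    intro C D hC hD v w h d hd
    have hw : w ∈ transl v C := h ▸ self_mem_transl hD w
    have h1 := hC.add_mem (mem_transl.1 hw) hd
    have h2 : w + d ∈ transl v C := mem_transl.2 (by rwa [add_sub_right_comm])
    rw [h, mem_transl] at h2
    simpa using h2
  exact (aux hC hD h).antisymm (aux hD hC h.symm)

/-- Tight containment, with the apex of the translate chosen in `P`. -/
theorem TCtight_iff {Q T P : Set V} : TCtight Q T P ↔
    ∃ F w, IsFace Q F ∧ w ∈ P ∧ T = transl w (tanCone Q F) ∧ P ⊆ T := by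
  constructor
  · rintro ⟨F, v, hF, rfl, hsub, w, hwP, hw⟩
    have hw := mem_transl.1 hw
    have heq : transl v (tanCone Q F) = transl w (tanCone Q F) :=
      transl_eq (tanCone_isConvexCone Q F) (mem_transl.2 hw.1)
        (mem_transl.2 (by simpa using hw.2))
    exact ⟨F, w, hF, hwP, heq, hsub⟩
  · rintro ⟨F, w, hF, hwP, rfl, hsub⟩
    have h0 := (tanCone_isConvexCone Q F).1
    exact ⟨F, w, hF, rfl, hsub, w, hwP, mem_transl.2 (by simpa [lineal] using h0)⟩

theorem tight_unique {C P : Set V} (hC : IsConvexCone C) {w w' : V} (hw : w ∈ P) (hw' : w' ∈ P)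
    (h : P ⊆ transl w C) (h' : P ⊆ transl w' C) : transl w C = transl w' C :=
  transl_eq hC (h hw') (h' hw)

/-- The points of `Q` at which `⟪y, ·⟫` is maximal; empty if the supremum is not attained. -/
def argmax (Q : Set V) (y : V) : Set V := {x | x ∈ Q ∧ ∀ q ∈ Q, ⟪y, q⟫ ≤ ⟪y, x⟫}

theorem isFace_argmax {Q : Set V} {y : V} (h : (argmax Q y).Nonempty) : IsFace Q (argmax Q y) :=
  ⟨y, h, rfl⟩

theorem mem_normCone_argmax (Q : Set V) (y : V) : y ∈ normCone Q (argmax Q y) :=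
  fun _ hv q hq => hv.2 q hq

theorem IsFace.subset {Q F : Set V} (h : IsFace Q F) : F ⊆ Q := by
  obtain ⟨y, _, rfl⟩ := h
  exact fun x hx => hx.1

theorem exists_normCone {Q P : Set V} (hP : IsExtDef Q P) {y w : V} (hw : w ∈ P)
    (hmax : ∀ p ∈ P, ⟪y, p⟫ ≤ ⟪y, w⟫) :
    ∃ G, IsFace Q G ∧ y ∈ normCone Q G ∧ ∀ z ∈ normCone Q G, ∀ p ∈ P, ⟪z, p⟫ ≤ ⟪z, w⟫ := by
  have hwf : w ∈ argmax P y := ⟨hw, hmax⟩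
  obtain ⟨𝒢, h𝒢, heq⟩ := hP.2 _ (isFace_argmax ⟨w, hwf⟩)
  have hy := mem_normCone_argmax P y
  rw [heq] at hy
  obtain ⟨G, hG, hyG⟩ := Set.mem_iUnion₂.1 hy
  refine ⟨G, h𝒢 G hG, hyG, fun z hz p hp => ?_⟩
  have hz' : z ∈ normCone P (argmax P y) := by
    rw [heq]
    exact Set.mem_iUnion₂.2 ⟨G, hG, hz⟩
  exact hz' w hwf p hp

theorem subset_argmax {Q G : Set V} (hG : IsFace Q G) {y : V} (hy : y ∈ normCone Q G) :
    G ⊆ argmax Q y := fun g hg => ⟨hG.subset hg, hy g hg⟩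

theorem normCone_anti {Q F G : Set V} (h : G ⊆ F) : normCone Q F ⊆ normCone Q G :=
  fun _ hy v hv => hy v (h hv)

/-- A maximum `w` of `y` on an extended deformation `P` is the apex of a translate containing `P` of
the tangent cone at the face of `Q` where `y` is maximal. Indeed `y` is in some `normCone Q G` all
of whose elements are maximal on `P` at `w`; since `G ⊆ argmax Q y`, it contains the normal cone
of `argmax Q y`. -/
theorem extDef_subset_transl {Q P : Set V} (hQ : IsPolyhedron Q) (hP : IsExtDef Q P) {y w : V}
    (hw : w ∈ P) (hmax : ∀ p ∈ P, ⟪y, p⟫ ≤ ⟪y, w⟫) :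
    (argmax Q y).Nonempty ∧ P ⊆ transl w (tanCone Q (argmax Q y)) := by
  obtain ⟨G, hG, hyG, hz⟩ := exists_normCone hP hw hmax
  have hsub := subset_argmax hG hyG
  have hne : (argmax Q y).Nonempty := by
    obtain ⟨_, h, _⟩ := hG
    exact h.mono hsub
  refine ⟨hne, fun p hp => mem_transl.2 ((mem_tanCone_iff hQ (isFace_argmax hne)).2 fun z hzF => ?_)⟩
  rw [inner_sub_right, sub_nonpos]
  exact hz z (normCone_anti hsub hzF) p hp

/-- Tight containment in terms of the linear span of the normal cone and the single functional `y`,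
in the form to which `euler_tight` applies. -/
theorem TCtight_transl_iff {Q P : Set V} (hQ : IsPolyhedron Q) (hP : IsExtDef Q P) {y : V}
    (hne : (argmax Q y).Nonempty) (v : V) :
    TCtight Q (transl v (tanCone Q (argmax Q y))) P ↔
      (∃ w ∈ P, w - v ∈ (Submodule.span ℝ (normCone Q (argmax Q y)))ᗮ) ∧
        ∀ p ∈ P, ⟪y, p⟫ ≤ ⟪y, v⟫ := by
  set C := tanCone Q (argmax Q y) with hCdef
  have hC : IsConvexCone C := tanCone_isConvexCone _ _
  have hF := isFace_argmax hne
  have hyN := mem_normCone_argmax Q y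
  rw [TCtight_iff]
  constructor
  · rintro ⟨F, w, _, hwP, heq, hsub⟩
    have hCC := cone_eq_of_transl_eq hC (tanCone_isConvexCone Q F) heq
    rw [← hCC] at heq
    have h1 : w - v ∈ C := mem_transl.1 (heq ▸ self_mem_transl hC w)
    have h2 : v - w ∈ C := mem_transl.1 (heq ▸ self_mem_transl hC v)
    refine ⟨⟨w, hwP, ?_⟩, fun p hp => ?_⟩
    · have hle : Submodule.span ℝ (normCone Q (argmax Q y)) ≤ (ℝ ∙ (w - v))ᗮ := by
        rw [Submodule.span_le]
        intro z hz
        refine Submodule.mem_orthogonal_singleton_iff_inner_left.2 (le_antisymm ?_ ?_)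
        · exact inner_nonpos_of_mem hz h1
        · have := inner_nonpos_of_mem hz h2
          rw [← neg_sub, inner_neg_right] at this
          linarith
      exact (Submodule.mem_orthogonal _ _).2 fun u hu =>
        Submodule.mem_orthogonal_singleton_iff_inner_left.1 (hle hu)
    · have := inner_nonpos_of_mem hyN (mem_transl.1 (hsub hp))
      rw [inner_sub_right] at this
      linarith
  · rintro ⟨⟨w, hwP, hw⟩, hle⟩
    have hz : ∀ z ∈ normCone Q (argmax Q y), ⟪z, w - v⟫ = 0 := fun z hz =>
      (Submodule.mem_orthogonal _ _).1 hw z (Submodule.subset_span hz)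
    have h1 : w ∈ transl v C := mem_transl.2 ((mem_tanCone_iff hQ hF).2 fun z hzN => (hz z hzN).le)
    have h2 : v ∈ transl w C := mem_transl.2 ((mem_tanCone_iff hQ hF).2 fun z hzN => by
      rw [← neg_sub, inner_neg_right, hz z hzN, neg_zero])
    have heq := transl_eq hC h1 h2
    have hyw : ⟪y, w⟫ = ⟪y, v⟫ := by
      have := hz y hyN
      rw [inner_sub_right] at this
      linarith
    refine ⟨_, w, hF, hwP, heq, ?_⟩
    rw [heq]
    exact (extDef_subset_transl hQ hP hwP fun p hp => hyw ▸ hle p hp).2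

/-- The set of tangent cones of `Q`. -/
def tanCones (Q : Set V) : Set (Set V) := {C | ∃ F, IsFace Q F ∧ C = tanCone Q F}

theorem tanCones_finite {Q : Set V} (hQ : IsPolyhedron Q) : (tanCones Q).Finite := by
  obtain ⟨_, s, hs⟩ := hQ
  refine ((s.powerset.finite_toSet).image
    fun A : Finset (V × ℝ) => {d : V | ∀ p ∈ A, ⟪p.1, d⟫ ≤ 0}).subset ?_
  rintro _ ⟨F, hF, rfl⟩
  obtain ⟨_, _, A, hA, heq, _⟩ := tanCone_struct s Q F hs hF
  exact ⟨A, Finset.mem_coe.2 (Finset.mem_powerset.2 hA), heq.symm⟩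

/-- For each of the finitely many tangent cones, at most one translate tightly contains `P`. -/
theorem tight_finite {Q : Set V} (hQ : IsPolyhedron Q) (P : Set V) :
    {T : Set V | TCtight Q T P}.Finite := by
  have : {T : Set V | TCtight Q T P} ⊆
      ⋃ C ∈ tanCones Q, {T | ∃ w ∈ P, T = transl w C ∧ P ⊆ T} := by
    intro T hT
    obtain ⟨F, w, hF, hw, hTe, hsub⟩ := TCtight_iff.1 hT
    exact Set.mem_iUnion₂.2 ⟨_, ⟨F, hF, rfl⟩, w, hw, hTe, hsub⟩
  refine ((tanCones_finite hQ).biUnion ?_).subset this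
  rintro _ ⟨F, _, rfl⟩
  refine Set.Subsingleton.finite ?_
  rintro _ ⟨w, hw, rfl, hsub⟩ _ ⟨w', hw', rfl, hsub'⟩
  exact tight_unique (tanCone_isConvexCone Q F) hw hw' hsub hsub'

theorem transl_isPolyhedron {Q F : Set V} (hQ : IsPolyhedron Q) (hF : IsFace Q F) (v : V) :
    IsPolyhedron (transl v (tanCone Q F)) := by
  classical
  refine ⟨⟨v, self_mem_transl (tanCone_isConvexCone Q F) v⟩, ?_⟩
  obtain ⟨_, s, hs⟩ := hQ
  obtain ⟨_, _, A, _, heq, _⟩ := tanCone_struct s Q F hs hF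
  refine ⟨A.image fun p => (p.1, ⟪p.1, v⟫), ?_⟩
  ext x
  rw [mem_transl, heq]
  simp only [Set.mem_ofPred_eq, Finset.forall_mem_image, inner_sub_right, sub_nonpos]

/-- Translates of tangent cones of `Q` are extended deformations of `Q`: for `y` in a normal cone of
the translate, the whole normal cone of `Q` at `argmax Q y` is contained in that normal cone. -/
theorem transl_isExtDef {Q F : Set V} (hQ : IsPolyhedron Q) (hF : IsFace Q F) (v : V) :
    IsExtDef Q (transl v (tanCone Q F)) := by
  refine ⟨transl_isPolyhedron hQ hF v, ?_⟩
  have hC := tanCone_isConvexCone Q F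
  set C := tanCone Q F with hCdef
  intro Φ hΦ
  refine ⟨{G | IsFace Q G ∧ normCone Q G ⊆ normCone (transl v C) Φ}, fun G hG => hG.1,
    Set.Subset.antisymm ?_ (Set.iUnion₂_subset fun G hG => hG.2)⟩
  intro y hy
  obtain ⟨f0, hf0⟩ : Φ.Nonempty := by
    obtain ⟨_, h, _⟩ := hΦ
    exact h
  have hcone : ∀ d ∈ C, ⟪y, d⟫ ≤ 0 := by
    intro d hd
    have h1 : f0 + d ∈ transl v C :=
      mem_transl.2 (by
        rw [add_sub_right_comm]
        exact hC.add_mem (mem_transl.1 (hΦ.subset hf0)) hd)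
    have := hy f0 hf0 _ h1
    rw [inner_add_right] at this
    linarith
  have hyF : y ∈ normCone Q F := by
    intro x hx q hq
    have := hcone (q - x) (subset_coneGen _ ⟨q, hq, x, hx, rfl⟩)
    rw [inner_sub_right] at this
    linarith
  have hFG : F ⊆ argmax Q y := subset_argmax hF hyF
  have hne : (argmax Q y).Nonempty := by
    obtain ⟨_, h, _⟩ := hF
    exact h.mono hFG
  refine Set.mem_iUnion₂.2 ⟨argmax Q y, ⟨isFace_argmax hne, ?_⟩, mem_normCone_argmax Q y⟩
  intro z hz f hf t ht
  have hzF := normCone_anti hFG hz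
  have hfC := mem_transl.1 (hΦ.subset hf)
  have hyf : ⟪y, f - v⟫ = 0 := by
    refine le_antisymm (hcone _ hfC) ?_
    have := hy f hf v (self_mem_transl hC v)
    rw [inner_sub_right]
    linarith
  have hzf : ⟪z, f - v⟫ = 0 := by
    obtain ⟨_, s, hs⟩ := hQ
    obtain ⟨x0, hx0, _, _, _, _, hmove⟩ := tanCone_struct s Q F hs hF
    obtain ⟨ε, hε, hq⟩ := hmove _ hfC
    have hqG : x0 + ε • (f - v) ∈ argmax Q y := by
      refine ⟨hq, fun q hq' => ?_⟩
      rw [inner_add_right, inner_smul_right, hyf, mul_zero, add_zero]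
      exact hyF x0 hx0 q hq'
    have h1 := hz _ hqG x0 (hF.subset hx0)
    rw [inner_add_right, inner_smul_right] at h1
    have h2 := inner_nonpos_of_mem hzF hfC
    refine le_antisymm h2 ?_
    by_contra h
    have := mul_neg_of_pos_of_neg hε (not_le.1 h)
    linarith
  have h3 := inner_nonpos_of_mem hzF (mem_transl.1 ht)
  rw [inner_sub_right] at h3 hzf
  linarith

/-! ### The two maps on formal combinations of extended deformations -/

/-- The sum of the basis vectors indexed by the translates tightly containing `P`. -/
noncomputable def tightVec {Q : Set V} (hQ : IsPolyhedron Q) (P : Set V) : TranslSet Q →₀ ℤ :=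
  Finsupp.ofSupportFinite (fun T => iv (TCtight Q T.1 P)) (by
    refine ((tight_finite hQ P).preimage (Subtype.val_injective (p := (· ∈ TranslSet Q))).injOn).subset ?_
    intro T hT
    by_contra h
    exact hT (iv_neg h))

theorem tightVec_apply {Q : Set V} (hQ : IsPolyhedron Q) (P : Set V) (T : TranslSet Q) :
    tightVec hQ P T = iv (TCtight Q T.1 P) := rfl

/-- The type of extended deformations of `Q`. -/
abbrev ExtDef (Q : Set V) : Type _ := {P : Set V // IsExtDef Q P}

/-- A formal combination of extended deformations, viewed as a combination of indicator functions. -/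
noncomputable def indMap (Q : Set V) : (ExtDef Q →₀ ℤ) →ₗ[ℤ] indGroup Q :=
  Finsupp.linearCombination ℤ fun P : ExtDef Q =>
    (⟨indic P.1, Submodule.subset_span ⟨P.1, P.2, rfl⟩⟩ : indGroup Q)

/-- The linear extension of `P ↦ tightVec hQ P` to formal combinations of extended deformations. -/
noncomputable def tightMap {Q : Set V} (hQ : IsPolyhedron Q) :
    (ExtDef Q →₀ ℤ) →ₗ[ℤ] (TranslSet Q →₀ ℤ) :=
  Finsupp.linearCombination ℤ fun P : ExtDef Q => tightVec hQ P.1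

theorem indMap_apply (Q : Set V) (c : ExtDef Q →₀ ℤ) (x : V) :
    (indMap Q c : V → ℤ) x = ∑ P ∈ c.support, c P * iv (x ∈ P.1) := by
  rw [indMap, Finsupp.linearCombination_apply, Finsupp.sum]
  simp [Finset.sum_apply, indic_apply]

theorem tightMap_apply {Q : Set V} (hQ : IsPolyhedron Q) (c : ExtDef Q →₀ ℤ) (T : TranslSet Q) :
    tightMap hQ c T = ∑ P ∈ c.support, c P * iv (TCtight Q T.1 P.1) := by
  rw [tightMap, Finsupp.linearCombination_apply, Finsupp.sum]
  simp [Finsupp.finsetSum_apply, tightVec_apply]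

theorem indMap_eq_zero_iff (Q : Set V) (c : ExtDef Q →₀ ℤ) :
    indMap Q c = 0 ↔ ∀ x, ∑ P ∈ c.support, c P * iv (x ∈ P.1) = 0 := by
  simp only [← indMap_apply]
  rw [Subtype.ext_iff, funext_iff]
  rfl

theorem indMap_surjective (Q : Set V) : Function.Surjective (indMap Q) := by
  rintro ⟨f, hf⟩
  induction hf using Submodule.span_induction with
  | mem f hf =>
    obtain ⟨P, hP, rfl⟩ := hf
    exact ⟨Finsupp.single ⟨P, hP⟩ 1, by simp [indMap]⟩
  | zero => exact ⟨0, map_zero _⟩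
  | add f g hf hg ihf ihg =>
    obtain ⟨a, ha⟩ := ihf
    obtain ⟨b, hb⟩ := ihg
    exact ⟨a + b, by rw [map_add, ha, hb]; rfl⟩
  | smul n f hf ih =>
    obtain ⟨a, ha⟩ := ih
    exact ⟨n • a, by rw [map_smul, ha]; rfl⟩

theorem tightMap_eq_zero {Q : Set V} (hQ : IsPolyhedron Q) (c : ExtDef Q →₀ ℤ)
    (hc : indMap Q c = 0) : tightMap hQ c = 0 := by
  ext T
  obtain ⟨T, F, v, hF, rfl⟩ := T
  obtain ⟨y, hne, hFe⟩ := hF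
  have hFe : F = argmax Q y := hFe
  subst hFe
  rw [tightMap_apply, Finsupp.coe_zero, Pi.zero_apply]
  rw [Finset.sum_congr rfl fun P _ => by rw [iv_congr (TCtight_transl_iff hQ P.2 hne v)]]
  exact euler_tight c.support c (fun P => P.1) (fun P _ => P.2.1.isClosed)
    (fun P _ => P.2.1.convex) ((indMap_eq_zero_iff Q c).1 hc) _ y v
    (Submodule.subset_span (mem_normCone_argmax Q y))

/-- Whether `P` is contained in a given half-space can be read off linearly from `tightVec hQ P`:
it is decided by the translate of the tangent cone at `argmax Q y` that tightly contains `P`, if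
any. -/
theorem halfspace_functional {Q : Set V} (hQ : IsPolyhedron Q) (y : V) (r : ℝ) :
    ∃ φ : (TranslSet Q →₀ ℤ) →ₗ[ℤ] ℤ, ∀ P : ExtDef Q,
      φ (tightVec hQ P.1) = iv (∀ p ∈ P.1, ⟪y, p⟫ ≤ r) := by
  by_cases hne : (argmax Q y).Nonempty
  · set C := tanCone Q (argmax Q y) with hCdef
    have hC : IsConvexCone C := tanCone_isConvexCone _ _
    have hF := isFace_argmax hne
    refine ⟨Finsupp.linearCombination ℤ fun T => iv (∃ w, T.1 = transl w C ∧ ⟪y, w⟫ ≤ r), ?_⟩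
    rintro ⟨P, hP⟩
    rw [Finsupp.linearCombination_apply, Finsupp.sum]
    by_cases hle : ∀ p ∈ P, ⟪y, p⟫ ≤ r
    · obtain ⟨w, hw, hmax⟩ := hP.1.exists_max y r hle
      have hsub := (extDef_subset_transl hQ hP hw hmax).2
      set T0 : TranslSet Q := ⟨transl w C, _, w, hF, rfl⟩ with hT0
      have htight : TCtight Q T0.1 P := TCtight_iff.2 ⟨_, w, hF, hw, rfl, hsub⟩
      have h1 : tightVec hQ P T0 = 1 := iv_pos htight
      rw [Finset.sum_eq_single_of_mem T0]
      · rw [h1, iv_pos ⟨w, rfl, hle w hw⟩, iv_pos hle, one_smul]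
      · rw [Finsupp.mem_support_iff, h1]
        exact one_ne_zero
      · intro T _ hT
        rw [tightVec_apply]
        by_cases ht : TCtight Q T.1 P
        · rw [iv_neg (p := ∃ w, T.1 = transl w C ∧ ⟪y, w⟫ ≤ r), smul_zero]
          rintro ⟨u, hu, _⟩
          obtain ⟨F, w', _, hw', hTe, hsub'⟩ := TCtight_iff.1 ht
          have hCC := cone_eq_of_transl_eq hC (tanCone_isConvexCone Q F) (hu.symm.trans hTe)
          rw [← hCC] at hTe
          rw [hTe] at hsub'
          exact hT (Subtype.ext (hTe.trans (tight_unique hC hw' hw hsub' hsub)))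
        · rw [iv_neg ht, zero_smul]
    · rw [iv_neg hle]
      refine Finset.sum_eq_zero fun T _ => ?_
      rw [tightVec_apply]
      by_cases ht : TCtight Q T.1 P
      · rw [iv_neg (p := ∃ w, T.1 = transl w C ∧ ⟪y, w⟫ ≤ r), smul_zero]
        rintro ⟨u, hu, hur⟩
        obtain ⟨_, _, _, _, _, hsub⟩ := TCtight_iff.1 ht
        refine hle fun p hp => ?_
        have h1 : p ∈ transl u C := hu ▸ hsub hp
        have := inner_nonpos_of_mem (mem_normCone_argmax Q y) (mem_transl.1 h1)
        rw [inner_sub_right] at this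
        linarith
      · rw [iv_neg ht, zero_smul]
  · refine ⟨0, ?_⟩
    rintro ⟨P, hP⟩
    rw [LinearMap.zero_apply, iv_neg]
    intro hle
    obtain ⟨w, hw, hmax⟩ := hP.1.exists_max y r hle
    exact hne (extDef_subset_transl hQ hP hw hmax).1

theorem sum_halfspace_eq_zero {Q : Set V} (hQ : IsPolyhedron Q) (c : ExtDef Q →₀ ℤ)
    (hc : tightMap hQ c = 0) (y : V) (r : ℝ) :
    ∑ P ∈ c.support, c P * iv (∀ p ∈ P.1, ⟪y, p⟫ ≤ r) = 0 := by
  obtain ⟨φ, hφ⟩ := halfspace_functional hQ y r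
  have := congrArg φ hc
  rw [tightMap, Finsupp.linearCombination_apply, Finsupp.sum, map_sum, map_zero] at this
  rw [← this]
  exact Finset.sum_congr rfl fun P _ => by rw [map_smul, hφ, smul_eq_mul]

/-- The set of functionals that separate `x` from `P` with margin `1`, which is closed and convex, is
nonempty exactly when `x ∉ P`. -/
theorem separation_iff {P : Set V} (hc : IsClosed P) (hv : Convex ℝ P) (x : V) :
    {y : V | ∀ p ∈ P, ⟪y, p⟫ ≤ ⟪y, x⟫ - 1}.Nonempty ↔ x ∉ P := by
  constructor
  · rintro ⟨y, hy⟩ hx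
    have := hy x hx
    linarith
  · intro hx
    obtain ⟨f, u, h1, h2⟩ := geometric_hahn_banach_closed_point hv hc hx
    refine ⟨(f x - u)⁻¹ • (InnerProductSpace.toDual ℝ V).symm f, fun p hp => ?_⟩
    have hpos : 0 < f x - u := sub_pos.2 h2
    simp only [real_inner_smul_left, InnerProductSpace.toDual_symm_apply]
    have h3 := h1 p hp
    have h4 : (f x - u)⁻¹ * f p ≤ (f x - u)⁻¹ * u :=
      mul_le_mul_of_nonneg_left h3.le (inv_nonneg.2 hpos.le)
    have h5 : (f x - u)⁻¹ * (f x - u) = 1 := inv_mul_cancel₀ hpos.ne'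
    rw [mul_sub] at h5
    linarith

/-- The indicator function is determined by `tightVec`: counting the half-spaces that contain `P` but
not `x` by Euler characteristic, now in the dual space, gives `1 - indic P x`. -/
theorem indMap_eq_zero {Q : Set V} (hQ : IsPolyhedron Q) (c : ExtDef Q →₀ ℤ)
    (hc : tightMap hQ c = 0) : indMap Q c = 0 := by
  rw [indMap_eq_zero_iff]
  intro x
  have h0 := sum_halfspace_eq_zero hQ c hc 0 0
  have h1 := euler_closed c.support c
    (fun P => {y : V | ∀ p ∈ P.1, ⟪y, p⟫ ≤ ⟪y, x⟫ - 1}) ?_ ?_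
    fun y => sum_halfspace_eq_zero hQ c hc y (⟪y, x⟫ - 1)
  · refine Eq.trans ?_ ((congrArg₂ (· - ·) h0 h1).trans (sub_zero 0))
    rw [← Finset.sum_sub_distrib]
    refine Finset.sum_congr rfl fun P _ => ?_
    rw [← mul_sub, iv_congr (separation_iff P.2.1.isClosed P.2.1.convex x),
      iv_pos (p := ∀ p ∈ P.1, ⟪(0 : V), p⟫ ≤ 0) fun p _ => by simp]
    by_cases hx : x ∈ P.1
    · rw [iv_pos hx, iv_neg (not_not.2 hx), sub_zero]
    · rw [iv_neg hx, iv_pos hx, sub_self]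
  · intro P _
    simp only [Set.ofPred_forall]
    exact isClosed_iInter fun p => isClosed_iInter fun _ =>
      isClosed_le (by fun_prop) (by fun_prop)
  · intro P _ y hy z hz a b ha hb hab p hp
    have h1 := mul_le_mul_of_nonneg_left (hy p hp) ha
    have h2 := mul_le_mul_of_nonneg_left (hz p hp) hb
    simp only [inner_add_left, real_inner_smul_left]
    linarith

/-- A translate tightly containing another translate `v + tanCone Q F` equals it or comes from a
strictly larger tangent cone. -/
theorem ssubset_of_tight {Q F T : Set V} {v : V}
    (ht : TCtight Q T (transl v (tanCone Q F))) (hne : T ≠ transl v (tanCone Q F)) :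
    ∃ F' w, IsFace Q F' ∧ T = transl w (tanCone Q F') ∧ tanCone Q F ⊂ tanCone Q F' := by
  obtain ⟨F', w, hF', hw, rfl, hsub⟩ := TCtight_iff.1 ht
  have hC := tanCone_isConvexCone Q F
  refine ⟨F', w, hF', rfl, Set.ssubset_iff_subset_ne.2 ⟨fun d hd => ?_, fun he => ?_⟩⟩
  · have h1 : w + d ∈ transl v (tanCone Q F) :=
      mem_transl.2 (by
        rw [add_sub_right_comm]
        exact hC.add_mem (mem_transl.1 hw) hd)
    simpa using mem_transl.1 (hsub h1)
  · rw [← he] at hne hsub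
    exact hne (transl_eq hC (hsub (self_mem_transl hC v)) hw)

/-- `tightMap` hits every basis vector: `tightVec` of a translate `T` is the basis vector of `T` plus
those of translates of strictly larger tangent cones, so induction on the number of larger tangent
cones applies. -/
theorem single_mem_range {Q : Set V} (hQ : IsPolyhedron Q) (n : ℕ) :
    ∀ (F : Set V) (v : V) (hF : IsFace Q F),
      {D ∈ tanCones Q | tanCone Q F ⊂ D}.ncard = n →
      Finsupp.single (⟨transl v (tanCone Q F), F, v, hF, rfl⟩ : TranslSet Q) (1 : ℤ) ∈
        LinearMap.range (tightMap hQ) := by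
  induction n using Nat.strong_induction_on with
  | _ n ih =>
    intro F v hF hn
    set T : TranslSet Q := ⟨transl v (tanCone Q F), F, v, hF, rfl⟩ with hT
    have hC := tanCone_isConvexCone Q F
    have hu : tightVec hQ T.1 ∈ LinearMap.range (tightMap hQ) :=
      ⟨Finsupp.single ⟨T.1, transl_isExtDef hQ hF v⟩ 1, by simp [tightMap]⟩
    have hTT : tightVec hQ T.1 T = 1 :=
      iv_pos (TCtight_iff.2 ⟨F, v, hF, self_mem_transl hC v, rfl, subset_rfl⟩)
    have hdecomp := Finsupp.single_add_erase T (tightVec hQ T.1)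
    rw [hTT] at hdecomp
    rw [eq_sub_of_add_eq hdecomp]
    refine Submodule.sub_mem _ hu ?_
    rw [← Finsupp.sum_single (Finsupp.erase T (tightVec hQ T.1))]
    refine Submodule.sum_mem _ fun T' hT' => ?_
    rw [Finsupp.support_erase, Finset.mem_erase, Finsupp.mem_support_iff] at hT'
    obtain ⟨hne, hT'⟩ := hT'
    have ht : TCtight Q T'.1 T.1 := by
      by_contra h
      exact hT' (iv_neg h)
    obtain ⟨F', w, hF', hTe, hss⟩ := ssubset_of_tight ht fun h => hne (Subtype.ext h)
    have hlt : {D ∈ tanCones Q | tanCone Q F' ⊂ D}.ncard < n := by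
      rw [← hn]
      refine Set.ncard_lt_ncard ?_ ((tanCones_finite hQ).subset fun D hD => hD.1)
      have hsub : {D ∈ tanCones Q | tanCone Q F' ⊂ D} ⊆ {D ∈ tanCones Q | tanCone Q F ⊂ D} :=
        fun D hD => ⟨hD.1, hss.trans hD.2⟩
      refine (Set.ssubset_iff_of_subset hsub).2 ?_
      exact ⟨_, ⟨⟨F', hF', rfl⟩, hss⟩, fun h => (h.2).ne rfl⟩
    have := ih _ hlt F' w hF' rfl
    obtain ⟨T', hT'mem⟩ := T'
    have hTe : T' = transl w (tanCone Q F') := hTe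
    subst hTe
    rw [← mul_one (Finsupp.erase T (tightVec hQ T.1) _), ← smul_eq_mul, ← Finsupp.smul_single]
    exact Submodule.smul_mem _ _ this

theorem tightMap_surjective {Q : Set V} (hQ : IsPolyhedron Q) :
    Function.Surjective (tightMap hQ) := by
  rw [← LinearMap.range_eq_top, eq_top_iff]
  rintro g -
  rw [← Finsupp.sum_single g]
  refine Submodule.sum_mem _ fun T _ => ?_
  obtain ⟨T, F, v, hF, rfl⟩ := T
  rw [← mul_one (g _), ← smul_eq_mul, ← Finsupp.smul_single]
  exact Submodule.smul_mem _ _ (single_mem_range hQ _ F v hF rfl)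

/-- there is a unique `ℤ`-linear map `ℱ` from the indicator group of extended
deformations of `Q` to the free abelian group on the translates of tangent cones of `Q`
sending `1_P` to the sum of the standard basis vectors indexed by the translates tightly
containing `P`; moreover `ℱ` is an isomorphism. -/
theorem universal_map_of_extended_deformations (Q : Set V) (hQ : IsPolyhedron Q) :
    ∃ Fm : ↥(indGroup Q) →ₗ[ℤ] (↥(TranslSet Q) →₀ ℤ),
      (∀ (P : Set V) (hP : IsExtDef Q P) (T : ↥(TranslSet Q)),
        Fm ⟨indic P, Submodule.subset_span ⟨P, hP, rfl⟩⟩ T = iv (TCtight Q T.1 P)) ∧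
      Function.Bijective Fm ∧
      ∀ Fm' : ↥(indGroup Q) →ₗ[ℤ] (↥(TranslSet Q) →₀ ℤ),
        (∀ (P : Set V) (hP : IsExtDef Q P) (T : ↥(TranslSet Q)),
          Fm' ⟨indic P, Submodule.subset_span ⟨P, hP, rfl⟩⟩ T = iv (TCtight Q T.1 P)) →
        Fm' = Fm := by
  set Φ := indMap Q with hΦ
  set Ψ := tightMap hQ with hΨ
  have hsurj : Function.Surjective Φ := indMap_surjective Q
  have hker : LinearMap.ker Φ ≤ LinearMap.ker Ψ := fun c hc => tightMap_eq_zero hQ c hc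
  let Fm : ↥(indGroup Q) →ₗ[ℤ] (↥(TranslSet Q) →₀ ℤ) :=
    ((LinearMap.ker Φ).liftQ Ψ hker).comp (Φ.quotKerEquivOfSurjective hsurj).symm.toLinearMap
  have hFm : ∀ c, Fm (Φ c) = Ψ c := by
    intro c
    have : (Φ.quotKerEquivOfSurjective hsurj).symm (Φ c) = (LinearMap.ker Φ).mkQ c := by
      rw [LinearEquiv.symm_apply_eq]
      rfl
    change (LinearMap.ker Φ).liftQ Ψ hker ((Φ.quotKerEquivOfSurjective hsurj).symm (Φ c)) = Ψ c
    rw [this]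
    rfl
  have hΦs : ∀ (P : Set V) (hP : IsExtDef Q P), Φ (Finsupp.single (⟨P, hP⟩ : ExtDef Q) 1) =
      (⟨indic P, Submodule.subset_span ⟨P, hP, rfl⟩⟩ : ↥(indGroup Q)) :=
    fun P hP => by simp [hΦ, indMap]
  have hval : ∀ (P : Set V) (hP : IsExtDef Q P) (T : ↥(TranslSet Q)),
      Fm ⟨indic P, Submodule.subset_span ⟨P, hP, rfl⟩⟩ T = iv (TCtight Q T.1 P) := by
    intro P hP T
    rw [← hΦs P hP, hFm, hΨ, tightMap, Finsupp.linearCombination_single, one_smul, tightVec_apply]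
  refine ⟨Fm, hval, ⟨?_, ?_⟩, fun Fm' hFm' => ?_⟩
  · rw [injective_iff_map_eq_zero]
    intro f hf
    obtain ⟨c, rfl⟩ := hsurj f
    rw [hFm] at hf
    exact indMap_eq_zero hQ c hf
  · intro g
    obtain ⟨c, rfl⟩ := tightMap_surjective hQ g
    exact ⟨Φ c, hFm c⟩
  · have hcomp : Fm'.comp Φ = Fm.comp Φ := by
      refine Finsupp.lhom_ext' fun P => LinearMap.ext_ring ?_
      simp only [LinearMap.comp_apply, Finsupp.lsingle_apply, hΦs P.1 P.2]
      ext T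
      rw [hFm' P.1 P.2 T, hval P.1 P.2 T]
    ext f : 1
    obtain ⟨c, rfl⟩ := hsurj f
    exact LinearMap.congr_fun hcomp c
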